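/- arXiv:math/0701172 — 7 statements merged into one kernel-verified Lean document; each statement's English description precedes it below -/
import Mathlib

section
/- Let Y be a connected topological space, let U and V be open subsets of Y, and let h : Y → Y be a homeomorphism. Assume that the frontier of V is nonempty, that h maps the frontier of V into U, and that the image h '' (closure V) is disjoint from the frontier of U. Then h '' (closure V) ⊆ U. -/
/-- The connectedness argument in the proof of Proposition 1.1.3: if `Y` is connected,
`U`, `V` are open, `h` is a homeomorphism of `Y`, the frontier of `V` is nonempty,
`h` maps the frontier of `V` into `U`, and `h '' closure V` is disjoint from the frontier
of `U`, then `h '' closure V ⊆ U`. -/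
theorem stmt_1 {Y : Type*} [TopologicalSpace Y] [ConnectedSpace Y]
    (U V : Set Y) (hU : IsOpen U) (hV : IsOpen V) (h : Y ≃ₜ Y)
    (hne : (frontier V).Nonempty)
    (h1 : h '' frontier V ⊆ U)
    (h2 : Disjoint (h '' closure V) (frontier U)) :
    h '' closure V ⊆ U := by
  have key : closure V ∩ h ⁻¹' Uᶜ = V ∩ h ⁻¹' (closure U)ᶜ := by
    ext x
    constructor
    · rintro ⟨hx, hxU⟩
      refine ⟨?_, fun hc => ?_⟩
      · by_contra hxV
        exact hxU (h1 ⟨x, by rw [hV.frontier_eq]; exact ⟨hx, hxV⟩, rfl⟩)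
      · exact Set.disjoint_left.mp h2 ⟨x, hx, rfl⟩ (by rw [hU.frontier_eq]; exact ⟨hc, hxU⟩)
    · rintro ⟨hx, hxU⟩
      exact ⟨subset_closure hx, fun hc => hxU (subset_closure hc)⟩
  have hclopen : IsClopen (closure V ∩ h ⁻¹' Uᶜ) := by
    refine ⟨isClosed_closure.inter (hU.isClosed_compl.preimage h.continuous), ?_⟩
    rw [key]
    exact hV.inter (isClosed_closure.isOpen_compl.preimage h.continuous)
  rintro _ ⟨x, hx, rfl⟩
  by_contra hxU
  rcases isClopen_iff.mp hclopen with he | he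
  · have hmem : x ∈ closure V ∩ h ⁻¹' Uᶜ := ⟨hx, hxU⟩
    rw [he] at hmem
    exact hmem
  · obtain ⟨y, hy⟩ := hne
    have hmem : y ∈ closure V ∩ h ⁻¹' Uᶜ := by rw [he]; trivial
    exact hmem.2 (h1 ⟨y, hy, rfl⟩)
end

section
/- Let G be a group acting on a topological space X such that for every g ∈ G the map x ↦ g • x is a homeomorphism of X. Let F ⊆ X be an open set with G • F = X, and let 𝒰 be a locally finite family of subsets of X with the property that for every U ∈ 𝒰 and every g ∈ G, if (g • U) ∩ F ≠ ∅ then g • U ∈ 𝒰. Then the family of sets 𝒞 = {g • U | g ∈ G, U ∈ 𝒰} is locally finite in X. -/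
open Pointwise

/-- Section 3.4: if `F` is open with `G • F = X` and `𝒰` is a locally finite family of
subsets of `X` such that `g • U ∈ 𝒰` whenever `U ∈ 𝒰` and `(g • U) ∩ F ≠ ∅`, then the
family `𝒞 = {g • U | g ∈ G, U ∈ 𝒰}` is locally finite. -/
theorem stmt_3 {G X : Type*} [Group G] [TopologicalSpace X] [MulAction G X]
    (hcont : ∀ g : G, Continuous fun x : X => g • x)
    (F : Set X) (hF : IsOpen F) (hcov : (⋃ g : G, g • F) = Set.univ)
    (𝒰 : Set (Set X)) (hlf : LocallyFinite (fun U : 𝒰 => (U : Set X)))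
    (hprop : ∀ U ∈ 𝒰, ∀ g : G, (g • U) ∩ F ≠ ∅ → g • U ∈ 𝒰) :
    LocallyFinite (fun C : {C : Set X // ∃ g : G, ∃ U ∈ 𝒰, C = g • U} => (C : Set X)) := by
  intro x
  have hx : x ∈ ⋃ g : G, g • F := by rw [hcov]; trivial
  obtain ⟨h, hh⟩ := Set.mem_iUnion.1 hx
  rw [Set.mem_smul_set_iff_inv_smul_mem] at hh
  obtain ⟨V, hV, hfin⟩ := hlf (h⁻¹ • x)
  refine ⟨(fun z : X => h⁻¹ • z) ⁻¹' (V ∩ F),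
    (hcont h⁻¹).continuousAt.preimage_mem_nhds
      (Filter.inter_mem hV (hF.mem_nhds hh)), ?_⟩
  have hinj : Function.Injective
      (fun C : {C : Set X // ∃ g : G, ∃ U ∈ 𝒰, C = g • U} => h⁻¹ • (C : Set X)) := by
    intro A B hAB
    exact Subtype.ext (MulAction.injective h⁻¹ hAB)
  refine ((hfin.image (fun U : 𝒰 => (U : Set X))).preimage hinj.injOn).subset ?_
  rintro ⟨C, g, U, hU, rfl⟩ ⟨z, hz, hzV, hzF⟩
  have hz' : h⁻¹ • z ∈ h⁻¹ • g • U := Set.smul_mem_smul_set hz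
  have hmem : h⁻¹ • g • U ∈ 𝒰 := by
    rw [smul_smul] at hz' ⊢
    exact hprop U hU _ (Set.Nonempty.ne_empty ⟨_, hz', hzF⟩)
  exact ⟨⟨_, hmem⟩, ⟨_, hz', hzV⟩, rfl⟩
end

section
/- Let X be a normal Hausdorff topological space and G a group acting on X such that for every g ∈ G the map x ↦ g • x is a homeomorphism. Let I be an index set and U, V, W : I → Set X with each U i and V i open, closure (W i) ⊆ V i, and closure (V i) ⊆ U i for all i. Assume that the family (g, i) ↦ g • closure (W i) (indexed by G × I) covers X and is locally finite, and that the family (g, i) ↦ g • U i is locally finite. Then there exists a family of continuous functions φ : G × I → X → ℝ such that: (a) 0 ≤ φ (g,i) x ≤ 1 for all g, i, x; (b) φ (g,i) x = 0 whenever x ∉ g • V i; (c) for every x ∈ X only finitely many of the values φ (g,i) x are nonzero and their sum equals 1; and (d) φ (g,i) x = φ (1,i) (g⁻¹ • x) for all g ∈ G, i ∈ I, x ∈ X (equivariance: φ_{gU} = φ_U ∘ g⁻¹). -/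
open Pointwise

/-- Lemma 4.1: existence of a `G`-equivariant partition of unity subordinated to the
invariant locally finite cover by the translates `g • U i`, with shrinkings `V i`, `W i`. -/
theorem stmt_4 {G X : Type*} [Group G] [TopologicalSpace X] [NormalSpace X] [T2Space X]
    [MulAction G X]
    (hcont : ∀ g : G, Continuous fun x : X => g • x)
    {I : Type*} (U V W : I → Set X)
    (hUo : ∀ i, IsOpen (U i)) (hVo : ∀ i, IsOpen (V i))
    (hWV : ∀ i, closure (W i) ⊆ V i) (hVU : ∀ i, closure (V i) ⊆ U i)
    (hcov : (⋃ p : G × I, p.1 • closure (W p.2)) = Set.univ)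
    (hlfW : LocallyFinite (fun p : G × I => p.1 • closure (W p.2)))
    (hlfU : LocallyFinite (fun p : G × I => p.1 • U p.2)) :
    ∃ φ : G × I → X → ℝ,
      (∀ p, Continuous (φ p)) ∧
      (∀ p x, 0 ≤ φ p x ∧ φ p x ≤ 1) ∧
      (∀ p x, x ∉ p.1 • V p.2 → φ p x = 0) ∧
      (∀ x, {p : G × I | φ p x ≠ 0}.Finite ∧ ∑ᶠ p : G × I, φ p x = 1) ∧
      (∀ (g : G) (i : I) (x : X), φ (g, i) x = φ (1, i) (g⁻¹ • x)) := by
  have hf : ∀ i, ∃ f : C(X, ℝ), Set.EqOn f 0 (V i)ᶜ ∧ Set.EqOn f 1 (closure (W i)) ∧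
      ∀ x, f x ∈ Set.Icc (0 : ℝ) 1 := fun i =>
    exists_continuous_zero_one_of_isClosed (hVo i).isClosed_compl isClosed_closure
      (Set.disjoint_left.2 fun x hx hx' => hx (hWV i hx'))
  choose f hf0 hf1 hfI using hf
  let ψ : G × I → X → ℝ := fun p x => f p.2 (p.1⁻¹ • x)
  have hψc : ∀ p, Continuous (ψ p) := fun p => (f p.2).continuous.comp (hcont _)
  have hψ0 : ∀ p x, 0 ≤ ψ p x := fun p x => (hfI _ _).1
  have hψV : ∀ p x, x ∉ p.1 • V p.2 → ψ p x = 0 := by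
    intro p x hx
    rw [Set.mem_smul_set_iff_inv_smul_mem] at hx
    exact hf0 p.2 hx
  have hlf : LocallyFinite fun p => Function.support (ψ p) := by
    refine hlfU.subset fun p x hx => ?_
    by_contra h
    refine hx (hψV p x fun h' => h ?_)
    exact Set.smul_set_mono (subset_closure.trans (hVU p.2)) h'
  have hfin : ∀ x, (Function.support fun p => ψ p x).Finite := fun x => hlf.point_finite x
  let S : X → ℝ := fun x => ∑ᶠ p, ψ p x
  have hSc : Continuous S := continuous_finsum hψc hlf
  have hle : ∀ p x, ψ p x ≤ S x := fun p x => single_le_finsum p (hfin x) fun q => hψ0 q x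
  have hSpos : ∀ x, 0 < S x := by
    intro x
    have hx : x ∈ ⋃ p : G × I, p.1 • closure (W p.2) := hcov ▸ Set.mem_univ x
    obtain ⟨p, hp⟩ := Set.mem_iUnion.1 hx
    rw [Set.mem_smul_set_iff_inv_smul_mem] at hp
    have h1 : ψ p x = 1 := hf1 p.2 hp
    have := hle p x
    linarith
  have hSinv : ∀ (g : G) x, S (g⁻¹ • x) = S x := by
    intro g x
    refine finsum_eq_of_bijective (fun p : G × I => (g * p.1, p.2))
      ((Equiv.mulLeft g).prodCongr (Equiv.refl I)).bijective fun p => ?_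
    simp [ψ, mul_smul]
  refine ⟨fun p x => ψ p x / S x, fun p => (hψc p).div hSc fun x => (hSpos x).ne', ?_, ?_, ?_, ?_⟩
  · exact fun p x => ⟨div_nonneg (hψ0 p x) (hSpos x).le, (div_le_one (hSpos x)).2 (hle p x)⟩
  · intro p x hx
    simp [hψV p x hx]
  · intro x
    refine ⟨(hfin x).subset fun p hp h => hp (by simp [h]), ?_⟩
    simp only [div_eq_mul_inv]
    rw [← finsum_mul' _ _ (hfin x)]
    exact mul_inv_cancel₀ (hSpos x).ne'
  · intro g i x
    simp [ψ, hSinv]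
end

section
/- Let X and Y be locally compact Hausdorff spaces and f : X → Y a continuous proper map. Let βf : StoneCech X → StoneCech Y be the canonical continuous extension of stoneCechUnit ∘ f (obtained from the universal property of the Stone–Čech compactification). Then βf maps the remainder into the remainder: for every p ∈ StoneCech X not in the range of stoneCechUnit : X → StoneCech X, the point βf p is not in the range of stoneCechUnit : Y → StoneCech Y. -/
/-- Proposition 1.1.2 (Stone–Čech level): the extension of a proper map between locally
compact Hausdorff spaces to the Stone–Čech compactifications maps the remainder into the
remainder. -/
theorem stmt_8 {X Y : Type*} [TopologicalSpace X] [TopologicalSpace Y]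
    [LocallyCompactSpace X] [T2Space X] [LocallyCompactSpace Y] [T2Space Y]
    {f : X → Y} (hf : IsProperMap f) (p : StoneCech X)
    (hp : p ∉ Set.range (stoneCechUnit : X → StoneCech X)) :
    stoneCechExtend (continuous_stoneCechUnit.comp hf.continuous) p ∉
      Set.range (stoneCechUnit : Y → StoneCech Y) := by
  rintro ⟨y, hy⟩
  have hne : (Filter.comap (stoneCechUnit : X → StoneCech X) (nhds p)).NeBot :=
    Filter.comap_neBot_iff_frequently.2 (mem_closure_iff_frequently.1 (denseRange_stoneCechUnit p))
  obtain ⟨U, hU⟩ := Ultrafilter.exists_le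
    (Filter.comap (stoneCechUnit : X → StoneCech X) (nhds p))
  have hUp : Filter.Tendsto (stoneCechUnit : X → StoneCech X) U (nhds p) :=
    Filter.tendsto_iff_comap.2 hU
  have h1 := ((continuous_stoneCechExtend
    (continuous_stoneCechUnit.comp hf.continuous)).tendsto p).comp hUp
  rw [stoneCechExtend_extends, ← hy] at h1
  have : CompletelyRegularSpace Y :=
    OnePoint.isOpenEmbedding_coe.isInducing.completelyRegularSpace
  have h2 : Filter.Tendsto f U (nhds y) := isInducing_stoneCechUnit.tendsto_nhds_iff.2 h1
  obtain ⟨x, -, hx⟩ := hf.ultrafilter_le_nhds_of_tendsto h2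
  exact hp ⟨x, tendsto_nhds_unique
    ((continuous_stoneCechUnit.tendsto x).mono_left hx) hUp⟩
end

section
/- Let Λ be a directed partial order and (Y λ) a family of compact Hausdorff spaces indexed by Λ, with continuous bonding maps q κ λ : Y λ → Y κ for κ ≤ λ satisfying q λ λ = id and q κ λ ∘ q λ μ = q κ μ for κ ≤ λ ≤ μ. Let D λ ⊆ Y λ be subsets such that: (a) each D λ is dense in Y λ; (b) for all κ ≤ λ, the image q κ λ '' (D λ) equals D κ; and (c) for all κ ≤ λ and every d ∈ D κ, the fiber {y ∈ D λ | q κ λ y = d} is compact. Let L = {y : Π λ, Y λ | ∀ κ ≤ λ, q κ λ (y λ) = y κ} be the inverse limit, with the subspace topology from the product. Then the set {y ∈ L | ∀ λ, y λ ∈ D λ} is dense in L. -/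
/-- The density claim underlying Theorem 5.1: in an inverse system of compact Hausdorff
spaces over a directed index set, with dense subsets `D λ` mapped onto each other by the
bonding maps and with compact fibers over points of `D κ`, the threads lying in all the
`D λ` are dense in the inverse limit. -/
theorem stmt_12 {Λ : Type*} [PartialOrder Λ] [IsDirected Λ (· ≤ ·)]
    (Y : Λ → Type*) [∀ l, TopologicalSpace (Y l)] [∀ l, CompactSpace (Y l)]
    [∀ l, T2Space (Y l)]
    (q : ∀ κ l, κ ≤ l → Y l → Y κ)
    (hqc : ∀ κ l (h : κ ≤ l), Continuous (q κ l h))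
    (hid : ∀ l (h : l ≤ l), q l l h = id)
    (hcomp : ∀ κ l μ (h1 : κ ≤ l) (h2 : l ≤ μ),
      (q κ l h1) ∘ (q l μ h2) = q κ μ (h1.trans h2))
    (D : ∀ l, Set (Y l))
    (hdense : ∀ l, Dense (D l))
    (himg : ∀ κ l (h : κ ≤ l), q κ l h '' D l = D κ)
    (hfib : ∀ κ l (h : κ ≤ l), ∀ d ∈ D κ, IsCompact {y ∈ D l | q κ l h y = d}) :
    Dense {y : {y : ∀ l, Y l // ∀ κ l (h : κ ≤ l), q κ l h (y l) = y κ} |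
      ∀ l, y.1 l ∈ D l} := by
  classical
  intro y
  rw [mem_closure_iff]
  intro U hU hyU
  rcases isEmpty_or_nonempty Λ with hE | hE
  · exact ⟨y, hyU, fun l => (hE.false l).elim⟩
  obtain ⟨V, hV, rfl⟩ := isOpen_induced_iff.1 hU
  obtain ⟨I, v, hv, hIV⟩ := isOpen_pi_iff.1 hV y.1 hyU
  obtain ⟨k, hk⟩ := I.exists_le
  -- choose a point of the dense set at level `k`
  have hWo : IsOpen (⋂ i : I, q i.1 k (hk i.1 i.2) ⁻¹' v i.1) :=
    isOpen_iInter_of_finite fun i => (hv i.1 i.2).1.preimage (hqc _ _ _)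
  have hyW : y.1 k ∈ ⋂ i : I, q i.1 k (hk i.1 i.2) ⁻¹' v i.1 := by
    rw [Set.mem_iInter]
    intro i
    rw [Set.mem_preimage, y.2]
    exact (hv i.1 i.2).2
  obtain ⟨d, hdW, hdD⟩ := (hdense k).inter_open_nonempty _ hWo ⟨_, hyW⟩
  rw [Set.mem_iInter] at hdW
  have hc : ∀ κ l μ (h1 : κ ≤ l) (h2 : l ≤ μ) (x : Y μ),
      q κ l h1 (q l μ h2 x) = q κ μ (h1.trans h2) x :=
    fun κ l μ h1 h2 x => congrFun (hcomp κ l μ h1 h2) x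
  let T : {m : Λ // k ≤ m} → Set (∀ l, Y l) := fun m =>
    {u | (∀ l (h : l ≤ m.1), q l m.1 h (u m.1) = u l) ∧
      u m.1 ∈ {z ∈ D m.1 | q k m.1 m.2 z = d}}
  have hanti : ∀ m n : {m : Λ // k ≤ m}, m.1 ≤ n.1 → T n ⊆ T m := by
    rintro m n hmn u ⟨hu1, hu2, hu3⟩
    refine ⟨fun l h => ?_, ?_, ?_⟩
    · rw [← hu1 m.1 hmn, hc, hu1]
    · rw [← hu1 m.1 hmn, ← himg m.1 n.1 hmn]
      exact ⟨_, hu2, rfl⟩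
    · rw [← hu1 m.1 hmn, hc, hu3]
  have hclosed : ∀ m, IsClosed (T m) := by
    intro m
    have h1 : IsClosed {u : ∀ l, Y l | ∀ l (h : l ≤ m.1), q l m.1 h (u m.1) = u l} := by
      simp only [Set.setOf_forall]
      exact isClosed_iInter fun l => isClosed_iInter fun h =>
        isClosed_eq ((hqc _ _ _).comp (continuous_apply _)) (continuous_apply _)
    exact h1.inter ((hfib k m.1 m.2 d hdD).isClosed.preimage (continuous_apply m.1))
  have hne : ∀ m, (T m).Nonempty := by
    intro m
    obtain ⟨e, he, hed⟩ : d ∈ q k m.1 m.2 '' D m.1 := by rw [himg]; exact hdD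
    have hm : q m.1 m.1 le_rfl e = e := by rw [hid]; rfl
    refine ⟨fun l => if h : l ≤ m.1 then q l m.1 h e else y.1 l, ?_, ?_, ?_⟩
    · intro l h
      simp only [dif_pos h, dif_pos (le_refl m.1), hm]
    · simp only [dif_pos (le_refl m.1), hm]
      exact he
    · simp only [dif_pos (le_refl m.1), hm]
      exact hed
  have : Nonempty {m : Λ // k ≤ m} := ⟨⟨k, le_rfl⟩⟩
  obtain ⟨u, hu⟩ := IsCompact.nonempty_iInter_of_directed_nonempty_isCompact_isClosed T
    (fun m n => by
      obtain ⟨p, hp1, hp2⟩ := exists_ge_ge m.1 n.1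
      exact ⟨⟨p, m.2.trans hp1⟩, hanti m ⟨p, m.2.trans hp1⟩ hp1,
        hanti n ⟨p, m.2.trans hp1⟩ hp2⟩)
    hne (fun m => (hclosed m).isCompact) hclosed
  rw [Set.mem_iInter] at hu
  have hall : ∀ l, (∀ κ (h : κ ≤ l), q κ l h (u l) = u κ) ∧ u l ∈ D l := by
    intro l
    obtain ⟨p, hp1, hp2⟩ := exists_ge_ge l k
    obtain ⟨h1, h2, -⟩ := hu ⟨p, hp2⟩
    refine ⟨fun κ h => ?_, ?_⟩
    · rw [← h1 l hp1, hc, h1]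
    · rw [← h1 l hp1, ← himg l p hp1]
      exact ⟨_, h2, rfl⟩
  have huk : u k = d := by
    have h3 := (hu ⟨k, le_rfl⟩).2.2
    simpa [hid] using h3
  refine ⟨⟨u, fun κ l h => (hall l).1 κ h⟩, hIV ?_, fun l => (hall l).2⟩
  intro i hi
  have h4 := hdW ⟨i, hi⟩
  rw [Set.mem_preimage, ← huk, (hall k).1] at h4
  exact h4
end

section
/- Let Y be a compact Hausdorff space and X ⊆ Y a dense open subset such that Y ∖ X is totally disconnected. Then every point y ∈ Y has a neighborhood basis consisting of open sets whose topological frontier is contained in X. -/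
/-- Used in the proof of Proposition 1.1.3: in a compact Hausdorff space `Y` with a dense
open subset `X` whose complement is totally disconnected, every point has a neighborhood
basis of open sets with frontier contained in `X`. -/
theorem stmt_14 {Y : Type*} [TopologicalSpace Y] [CompactSpace Y] [T2Space Y]
    (X : Set Y) (hXopen : IsOpen X) (hXdense : Dense X)
    (htd : IsTotallyDisconnected Xᶜ) (y : Y) :
    (nhds y).HasBasis (fun V : Set Y => y ∈ V ∧ IsOpen V ∧ frontier V ⊆ X) id := by
  have key : ∀ U : Set Y, IsOpen U → y ∈ U →
      ∃ V : Set Y, (y ∈ V ∧ IsOpen V ∧ frontier V ⊆ X) ∧ V ⊆ U := by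
    intro U hU hyU
    by_cases hy : y ∈ X
    · obtain ⟨V, hV, hyV, hcl⟩ := normal_exists_closure_subset
        (isClosed_singleton (x := y)) (hU.inter hXopen)
        (Set.singleton_subset_iff.2 ⟨hyU, hy⟩)
      exact ⟨V, ⟨Set.singleton_subset_iff.1 hyV, hV,
        fun z hz => (hcl (frontier_subset_closure hz)).2⟩,
        fun z hz => (hcl (subset_closure hz)).1⟩
    · have hZ : IsClosed Xᶜ := hXopen.isClosed_compl
      haveI : CompactSpace (Xᶜ : Set Y) := isCompact_iff_compactSpace.1 hZ.isCompact
      haveI : TotallyDisconnectedSpace (Xᶜ : Set Y) :=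
        totallyDisconnectedSpace_subtype_iff.2 htd
      obtain ⟨C, hC, hyC, hCU⟩ := compact_exists_isClopen_in_isOpen
        (hU.preimage (continuous_subtype_val (p := fun z => z ∈ Xᶜ)))
        (x := ⟨y, hy⟩) hyU
      have hA : IsClosed (Subtype.val '' C) := hZ.isClosedMap_subtype_val _ hC.isClosed
      have hB : IsClosed (Subtype.val '' Cᶜ) :=
        hZ.isClosedMap_subtype_val _ hC.compl.isClosed
      obtain ⟨V, hV, hAV, hcl⟩ := normal_exists_closure_subset hA
        (hU.inter hB.isOpen_compl) (by
          rintro _ ⟨z, hz, rfl⟩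
          refine ⟨hCU hz, ?_⟩
          rintro ⟨w, hw, hwz⟩
          exact hw (Subtype.ext hwz ▸ hz))
      refine ⟨V, ⟨hAV ⟨_, hyC, rfl⟩, hV, ?_⟩, fun z hz => (hcl (subset_closure hz)).1⟩
      intro z hz
      by_contra hzX
      rw [hV.frontier_eq] at hz
      by_cases hzC : (⟨z, hzX⟩ : (Xᶜ : Set Y)) ∈ C
      · exact hz.2 (hAV ⟨_, hzC, rfl⟩)
      · exact (hcl hz.1).2 ⟨_, hzC, rfl⟩
  refine ⟨fun t => ⟨fun ht => ?_, ?_⟩⟩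
  · obtain ⟨U, hUt, hU, hyU⟩ := mem_nhds_iff.1 ht
    obtain ⟨V, hV, hVU⟩ := key U hU hyU
    exact ⟨V, hV, hVU.trans hUt⟩
  · rintro ⟨V, ⟨hyV, hV, -⟩, hVt⟩
    exact Filter.mem_of_superset (hV.mem_nhds hyV) hVt
end

section
/- Let X be a locally compact Hausdorff space on which the additive group ℝ acts continuously and properly, let x ∈ X, and let V ⊆ X be an open set whose topological frontier is compact. If t • x ∈ V for arbitrarily large t (frequently along atTop), then there exists t₀ such that t • x ∈ V for all t ≥ t₀ (eventually along atTop). -/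
open Filter

/-- The orbit-connectedness argument from the Claim in Theorem 7.1(b): for a continuous
proper action of `ℝ` on a locally compact Hausdorff space, if `t +ᵥ x` lies in an open set
`V` with compact frontier for arbitrarily large `t`, then it lies in `V` eventually. -/
theorem stmt_17 {X : Type*} [TopologicalSpace X] [T2Space X] [LocallyCompactSpace X]
    [AddAction ℝ X] [ContinuousVAdd ℝ X] [ProperVAdd ℝ X]
    (x : X) (V : Set X) (hV : IsOpen V) (hfr : IsCompact (frontier V))
    (hfreq : ∃ᶠ t : ℝ in atTop, t +ᵥ x ∈ V) :
    ∀ᶠ t : ℝ in atTop, t +ᵥ x ∈ V := by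
  have hK : IsCompact {g : ℝ | (((g +ᵥ ·) '' ({x} : Set X)) ∩ frontier V).Nonempty} :=
    ProperVAdd.isCompact_setOfPred_inter_nonempty isCompact_singleton hfr
  obtain ⟨M, hM⟩ := hK.bddAbove
  have hc : Continuous fun t : ℝ => t +ᵥ x := continuous_id.vadd continuous_const
  obtain ⟨s, hs, hsV⟩ := (hfreq.and_eventually (eventually_gt_atTop M)).exists
  have hpre : IsPreconnected ((fun t : ℝ => t +ᵥ x) '' Set.Ioi M) :=
    isPreconnected_Ioi.image _ hc.continuousOn
  have hsub : (fun t : ℝ => t +ᵥ x) '' Set.Ioi M ⊆ V := by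
    refine hpre.subset_of_closure_inter_subset hV ⟨s +ᵥ x, ⟨s, hsV, rfl⟩, hs⟩ ?_
    rintro y ⟨hy, t, ht, rfl⟩
    by_contra hn
    have hf : t +ᵥ x ∈ frontier V := ⟨hy, by rwa [hV.interior_eq]⟩
    have := hM (show t ∈ _ from ⟨t +ᵥ x, ⟨x, rfl, rfl⟩, hf⟩)
    exact absurd ht (not_lt.mpr this)
  filter_upwards [eventually_gt_atTop M] with t ht
  exact hsub ⟨t, ht, rfl⟩
end
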